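/- Every connected non-degenerate trigraph G has an optimal antithickening, and any two optimal antithickenings of G are isomorphic as trigraphs. -/

import Mathlib

/-- A trigraph on a vertex type `V`: a symmetric adjacency function with values in
`{1, 0, -1}`, zero on the diagonal, such that semiedges form a matching. -/
structure Trigraph (V : Type) where
  θ : V → V → ℤ
  range_mem : ∀ u v, θ u v = 1 ∨ θ u v = 0 ∨ θ u v = -1
  symm : ∀ u v, θ u v = θ v u
  refl_zero : ∀ v, θ v v = 0
  semi_matching : ∀ u v w : V, u ≠ v → u ≠ w → v ≠ w → θ u v = 0 → θ u w ≠ 0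

namespace Trigraph

variable {V V' V'' : Type}

/-- `u` and `v` are strongly adjacent. -/
def StrongAdj (G : Trigraph V) (u v : V) : Prop := G.θ u v = 1

/-- Distinct `u` and `v` are semiadjacent. -/
def SemiAdj (G : Trigraph V) (u v : V) : Prop := u ≠ v ∧ G.θ u v = 0

/-- Distinct `u` and `v` are adjacent. -/
def Adj (G : Trigraph V) (u v : V) : Prop := u ≠ v ∧ (G.θ u v = 1 ∨ G.θ u v = 0)

/-- Distinct `u` and `v` are antiadjacent. -/
def AntiAdj (G : Trigraph V) (u v : V) : Prop := u ≠ v ∧ (G.θ u v = 0 ∨ G.θ u v = -1)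

/-- `u` and `v` are strongly antiadjacent. -/
def StrongAntiAdj (G : Trigraph V) (u v : V) : Prop := G.θ u v = -1

/-- `X` is strongly complete to `Y`. -/
def StronglyComplete (G : Trigraph V) (X Y : Set V) : Prop :=
  ∀ u ∈ X, ∀ v ∈ Y, G.StrongAdj u v

/-- `X` is strongly anticomplete to `Y`. -/
def StronglyAnticomplete (G : Trigraph V) (X Y : Set V) : Prop :=
  ∀ u ∈ X, ∀ v ∈ Y, G.StrongAntiAdj u v

/-- A strong clique: pairwise strongly adjacent vertices. -/
def IsStrongClique (G : Trigraph V) (K : Set V) : Prop := K.Pairwise G.StrongAdj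

/-- A stable set: pairwise antiadjacent vertices. -/
def IsStableSet (G : Trigraph V) (S : Set V) : Prop := S.Pairwise G.AntiAdj

/-- The neighbourhood of a vertex: the set of vertices adjacent to it. -/
def neighborhood (G : Trigraph V) (v : V) : Set V := {u | G.Adj v u}

/-- Claw-free: no vertex has three pairwise antiadjacent vertices in its neighbourhood. -/
def ClawFree (G : Trigraph V) : Prop :=
  ¬ ∃ v a b c : V, G.Adj v a ∧ G.Adj v b ∧ G.Adj v c ∧
    G.AntiAdj a b ∧ G.AntiAdj a c ∧ G.AntiAdj b c

/-- Cobipartite: the vertex set is the union of two strong cliques. -/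
def Cobipartite (G : Trigraph V) : Prop :=
  ∃ K1 K2 : Set V, G.IsStrongClique K1 ∧ G.IsStrongClique K2 ∧ K1 ∪ K2 = Set.univ

/-- Quasi-line: the neighbourhood of every vertex is the union of two strong cliques. -/
def QuasiLine (G : Trigraph V) : Prop :=
  ∀ v : V, ∃ K1 K2 : Set V, G.IsStrongClique K1 ∧ G.IsStrongClique K2 ∧
    G.neighborhood v = K1 ∪ K2

/-- Connected: any two vertices are joined by a sequence of consecutively adjacent vertices. -/
def Connected (G : Trigraph V) : Prop :=
  ∀ u v : V, Relation.ReflTransGen G.Adj u v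

/-- Non-degenerate: quasi-line and not cobipartite, or claw-free with stability number ≥ 3. -/
def NonDegenerate (G : Trigraph V) : Prop :=
  (G.QuasiLine ∧ ¬ G.Cobipartite) ∨
  (G.ClawFree ∧ ∃ S : Set V, G.IsStableSet S ∧ 3 ≤ S.ncard)

/-- A homogeneous set: `|V| > |X| ≥ 2` and every vertex outside `X` is strongly complete
or strongly anticomplete to `X`. -/
def HomogeneousSet (G : Trigraph V) (X : Set V) : Prop :=
  2 ≤ X.ncard ∧ X ≠ Set.univ ∧
  ∀ v ∉ X, G.StronglyComplete {v} X ∨ G.StronglyAnticomplete {v} X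

/-- `v1 v2 v3 v4` is a square: the pairs `v1v3`, `v2v4` are antiadjacent and the other
four pairs are adjacent. -/
def IsSquare (G : Trigraph V) (v1 v2 v3 v4 : V) : Prop :=
  G.AntiAdj v1 v3 ∧ G.AntiAdj v2 v4 ∧
  G.Adj v1 v2 ∧ G.Adj v2 v3 ∧ G.Adj v3 v4 ∧ G.Adj v4 v1

/-- `X` contains a square. -/
def HasSquareIn (G : Trigraph V) (X : Set V) : Prop :=
  ∃ v1 v2 v3 v4 : V, G.IsSquare v1 v2 v3 v4 ∧ ({v1, v2, v3, v4} : Set V) ⊆ X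

/-- Homogeneous pair of strong cliques `(A, B)`. -/
def HPOSC (G : Trigraph V) (A B : Set V) : Prop :=
  A.Nonempty ∧ B.Nonempty ∧ Disjoint A B ∧
  G.IsStrongClique A ∧ G.IsStrongClique B ∧
  ¬ (∃ a b : V, A = {a} ∧ B = {b}) ∧
  ∀ v ∉ A ∪ B,
    (G.StronglyComplete {v} A ∨ G.StronglyAnticomplete {v} A) ∧
    (G.StronglyComplete {v} B ∨ G.StronglyAnticomplete {v} B)

/-- Deletion-minimal homogeneous pair of strong cliques. -/
def DeletionMinimal (G : Trigraph V) (A B : Set V) : Prop :=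
  G.HPOSC A B ∧ G.HasSquareIn (A ∪ B) ∧
  (∀ a ∈ A, ¬ G.StronglyComplete {a} B ∧ ¬ G.StronglyAnticomplete {a} B) ∧
  (∀ b ∈ B, ¬ G.StronglyComplete {b} A ∧ ¬ G.StronglyAnticomplete {b} A)

/-- There is a square contained in `X` intersecting both `S1` and `S2`. -/
def SquareMeets (G : Trigraph V) (X S1 S2 : Set V) : Prop :=
  ∃ v1 v2 v3 v4 : V, G.IsSquare v1 v2 v3 v4 ∧ ({v1, v2, v3, v4} : Set V) ⊆ X ∧
    (({v1, v2, v3, v4} : Set V) ∩ S1).Nonempty ∧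
    (({v1, v2, v3, v4} : Set V) ∩ S2).Nonempty

/-- Square-connected homogeneous pair of strong cliques. -/
def SquareConnected (G : Trigraph V) (A B : Set V) : Prop :=
  G.HPOSC A B ∧
  (∀ A' A'' : Set V, A'.Nonempty → A''.Nonempty → A' ∪ A'' = A → Disjoint A' A'' →
    G.SquareMeets (A ∪ B) A' A'') ∧
  (∀ B' B'' : Set V, B'.Nonempty → B''.Nonempty → B' ∪ B'' = B → Disjoint B' B'' →
    G.SquareMeets (A ∪ B) B' B'')

/-- Inclusion-maximal square-connected homogeneous pair of strong cliques. -/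
def MaxSquareConnected (G : Trigraph V) (A B : Set V) : Prop :=
  G.SquareConnected A B ∧
  ∀ A' B' : Set V, G.SquareConnected A' B' → A ⊆ A' → B ⊆ B' → A' = A ∧ B' = B

/-- Two homogeneous pairs have skew intersection if a part of one intersects both
parts of the other. -/
def SkewIntersection (A1 B1 A2 B2 : Set V) : Prop :=
  ((A1 ∩ A2).Nonempty ∧ (A1 ∩ B2).Nonempty) ∨
  ((B1 ∩ A2).Nonempty ∧ (B1 ∩ B2).Nonempty) ∨
  ((A2 ∩ A1).Nonempty ∧ (A2 ∩ B1).Nonempty) ∨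
  ((B2 ∩ A1).Nonempty ∧ (B2 ∩ B1).Nonempty)

/-- Laminar: contains no square-connected homogeneous pair of strong cliques. -/
def Laminar (G : Trigraph V) : Prop := ¬ ∃ A B : Set V, G.SquareConnected A B

/-- `G` is a thickening of `G'` via the map `I` (equivalently, `G'` is an antithickening
of `G`): the `I v` are nonempty strong cliques partitioning `V(G)` respecting adjacency. -/
def IsThickening (G : Trigraph V) (G' : Trigraph V') (I : V' → Set V) : Prop :=
  (∀ v : V', (I v).Nonempty ∧ G.IsStrongClique (I v)) ∧
  (∀ u v : V', u ≠ v → Disjoint (I u) (I v)) ∧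
  (⋃ v : V', I v) = Set.univ ∧
  ∀ u v : V', u ≠ v →
    (G'.StrongAdj u v → G.StronglyComplete (I u) (I v)) ∧
    (G'.StrongAntiAdj u v → G.StronglyAnticomplete (I u) (I v)) ∧
    (G'.SemiAdj u v →
      ¬ G.StronglyComplete (I u) (I v) ∧ ¬ G.StronglyAnticomplete (I u) (I v))

/-- `G'` (with thickening map `I`) is an optimal antithickening of `G`: it is a laminar
antithickening with the maximum possible number of vertices. -/
def OptimalAntithickening (G : Trigraph V) (G' : Trigraph V') (I : V' → Set V) : Prop :=
  G.IsThickening G' I ∧ G'.Laminar ∧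
  ∀ (W : Type) (H : Trigraph W) (J : W → Set V),
    G.IsThickening H J → H.Laminar → Nat.card W ≤ Nat.card V'

/-- Isomorphism of trigraphs. -/
def Isomorphic (G1 : Trigraph V) (G2 : Trigraph V') : Prop :=
  ∃ f : V ≃ V', ∀ u v : V, G2.θ (f u) (f v) = G1.θ u v

end Trigraph

namespace Trigraph

variable {V W U : Type}

/-- Normal form of a square with `a1 a2` in one clique and `b1 b2` in the other. -/
def Sq (G : Trigraph V) (a1 a2 b1 b2 : V) : Prop :=
  a1 ≠ a2 ∧ b1 ≠ b2 ∧ G.θ a1 b1 ≠ -1 ∧ G.θ a2 b2 ≠ -1 ∧ G.θ a1 b2 ≠ 1 ∧ G.θ a2 b1 ≠ 1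

theorem Sq.swap {G : Trigraph V} {a1 a2 b1 b2 : V} (h : G.Sq a1 a2 b1 b2) :
    G.Sq a2 a1 b2 b1 := by
  obtain ⟨h1, h2, h3, h4, h5, h6⟩ := h
  exact ⟨h1.symm, h2.symm, h4, h3, h6, h5⟩

theorem Sq.flip {G : Trigraph V} {a1 a2 b1 b2 : V} (h : G.Sq a1 a2 b1 b2) :
    G.Sq b1 b2 a1 a2 := by
  obtain ⟨h1, h2, h3, h4, h5, h6⟩ := h
  refine ⟨h2, h1, ?_, ?_, ?_, ?_⟩
  · rwa [G.symm]
  · rwa [G.symm]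
  · rwa [G.symm]
  · rwa [G.symm]

/-- Convenient form of square-connected homogeneous pairs of strong cliques. -/
structure SC (G : Trigraph V) (A B : Set V) : Prop where
  dis : ∀ x, x ∈ A → x ∈ B → False
  clA : ∀ x ∈ A, ∀ y ∈ A, x ≠ y → G.θ x y = 1
  clB : ∀ x ∈ B, ∀ y ∈ B, x ≠ y → G.θ x y = 1
  hA : ∀ v, v ∉ A → v ∉ B → (∀ a ∈ A, G.θ v a = 1) ∨ (∀ a ∈ A, G.θ v a = -1)
  hB : ∀ v, v ∉ A → v ∉ B → (∀ b ∈ B, G.θ v b = 1) ∨ (∀ b ∈ B, G.θ v b = -1)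
  twoA : ∃ a ∈ A, ∃ a' ∈ A, a ≠ a'
  twoB : ∃ b ∈ B, ∃ b' ∈ B, b ≠ b'
  sqA : ∀ P : V → Prop, (∃ a ∈ A, P a) → (∃ a ∈ A, ¬ P a) →
    ∃ a1 ∈ A, ∃ a2 ∈ A, ∃ b1 ∈ B, ∃ b2 ∈ B, P a1 ∧ ¬ P a2 ∧ G.Sq a1 a2 b1 b2
  sqB : ∀ P : V → Prop, (∃ b ∈ B, P b) → (∃ b ∈ B, ¬ P b) →
    ∃ b1 ∈ B, ∃ b2 ∈ B, ∃ a1 ∈ A, ∃ a2 ∈ A, P b1 ∧ ¬ P b2 ∧ G.Sq b1 b2 a1 a2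

theorem SC.flip {G : Trigraph V} {A B : Set V} (h : G.SC A B) : G.SC B A where
  dis x hx hy := h.dis x hy hx
  clA := h.clB
  clB := h.clA
  hA v h1 h2 := h.hB v h2 h1
  hB v h1 h2 := h.hA v h2 h1
  twoA := h.twoB
  twoB := h.twoA
  sqA := h.sqB
  sqB := h.sqA

theorem perm4a (v1 v2 v3 v4 : V) : ({v1, v2, v3, v4} : Set V) = {v1, v2, v4, v3} := by
  ext x
  simp only [Set.mem_insert_iff, Set.mem_singleton_iff]
  grind

theorem perm4b (v1 v2 v3 v4 : V) : ({v1, v2, v3, v4} : Set V) = {v1, v4, v2, v3} := by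
  ext x
  simp only [Set.mem_insert_iff, Set.mem_singleton_iff]
  grind

theorem perm4c (v1 v2 v3 v4 : V) : ({v1, v2, v3, v4} : Set V) = {v2, v3, v1, v4} := by
  ext x
  simp only [Set.mem_insert_iff, Set.mem_singleton_iff]
  grind

theorem perm4d (v1 v2 v3 v4 : V) : ({v1, v2, v3, v4} : Set V) = {v4, v3, v1, v2} := by
  ext x
  simp only [Set.mem_insert_iff, Set.mem_singleton_iff]
  grind

theorem square_norm {G : Trigraph V} {A B : Set V}
    (clA : ∀ x ∈ A, ∀ y ∈ A, x ≠ y → G.θ x y = 1)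
    (clB : ∀ x ∈ B, ∀ y ∈ B, x ≠ y → G.θ x y = 1)
    {v1 v2 v3 v4 : V} (h : G.IsSquare v1 v2 v3 v4)
    (hs : ({v1, v2, v3, v4} : Set V) ⊆ A ∪ B) (hdis : ∀ x, x ∈ A → x ∈ B → False) :
    ∃ a1 ∈ A, ∃ a2 ∈ A, ∃ b1 ∈ B, ∃ b2 ∈ B, G.Sq a1 a2 b1 b2 ∧
      ({v1, v2, v3, v4} : Set V) = {a1, a2, b1, b2} := by
  obtain ⟨⟨n13, h13⟩, ⟨n24, h24⟩, ⟨n12, h12⟩, ⟨n23, h23⟩, ⟨n34, h34⟩, ⟨n41, h41⟩⟩ := h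
  have m1 : v1 ∈ A ∪ B := hs (by simp)
  have m2 : v2 ∈ A ∪ B := hs (by simp)
  have m3 : v3 ∈ A ∪ B := hs (by simp)
  have m4 : v4 ∈ A ∪ B := hs (by simp)
  have A13 : v1 ∈ A → v3 ∈ A → False := fun p q => by have := clA _ p _ q n13; omega
  have B13 : v1 ∈ B → v3 ∈ B → False := fun p q => by have := clB _ p _ q n13; omega
  have A24 : v2 ∈ A → v4 ∈ A → False := fun p q => by have := clA _ p _ q n24; omega
  have B24 : v2 ∈ B → v4 ∈ B → False := fun p q => by have := clB _ p _ q n24; omega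
  have s1 := G.symm v1 v3
  have s2 := G.symm v2 v4
  have s3 := G.symm v1 v2
  have s4 := G.symm v2 v3
  have s5 := G.symm v3 v4
  have s6 := G.symm v4 v1
  have key : ∀ a1 a2 b1 b2 : V, a1 ∈ A → a2 ∈ A → b1 ∈ B → b2 ∈ B → G.Sq a1 a2 b1 b2 →
      ({v1, v2, v3, v4} : Set V) = {a1, a2, b1, b2} →
      ∃ a1 ∈ A, ∃ a2 ∈ A, ∃ b1 ∈ B, ∃ b2 ∈ B, G.Sq a1 a2 b1 b2 ∧
      ({v1, v2, v3, v4} : Set V) = {a1, a2, b1, b2} :=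
    fun a1 a2 b1 b2 p1 p2 p3 p4 p5 p6 => ⟨a1, p1, a2, p2, b1, p3, b2, p4, p5, p6⟩
  rcases m1 with m1 | m1
  · have m3 : v3 ∈ B := m3.resolve_left (A13 m1)
    rcases m2 with m2 | m2
    · have m4 : v4 ∈ B := m4.resolve_left (A24 m2)
      refine key v1 v2 v4 v3 m1 m2 m4 m3 ⟨n12, n34.symm, ?_, ?_, ?_, ?_⟩ ?_
      on_goal 5 => exact perm4a v1 v2 v3 v4
      all_goals omega
    · have m4 : v4 ∈ A := m4.resolve_right (B24 m2)
      refine key v1 v4 v2 v3 m1 m4 m2 m3 ⟨n41.symm, n23, ?_, ?_, ?_, ?_⟩ ?_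
      on_goal 5 => exact perm4b v1 v2 v3 v4
      all_goals omega
  · have m3 : v3 ∈ A := m3.resolve_right (B13 m1)
    rcases m2 with m2 | m2
    · have m4 : v4 ∈ B := m4.resolve_left (A24 m2)
      refine key v2 v3 v1 v4 m2 m3 m1 m4 ⟨n23, n41.symm, ?_, ?_, ?_, ?_⟩ ?_
      on_goal 5 => exact perm4c v1 v2 v3 v4
      all_goals omega
    · have m4 : v4 ∈ A := m4.resolve_right (B24 m2)
      refine key v4 v3 v1 v2 m4 m3 m1 m2 ⟨n34.symm, n12, ?_, ?_, ?_, ?_⟩ ?_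
      on_goal 5 => exact perm4d v1 v2 v3 v4
      all_goals omega

/-- From partition form to predicate form, one side. -/
theorem sq_of_meets {G : Trigraph V} {A B : Set V}
    (clA : ∀ x ∈ A, ∀ y ∈ A, x ≠ y → G.θ x y = 1)
    (clB : ∀ x ∈ B, ∀ y ∈ B, x ≠ y → G.θ x y = 1)
    (hdis : ∀ x, x ∈ A → x ∈ B → False)
    (h : ∀ A' A'' : Set V, A'.Nonempty → A''.Nonempty → A' ∪ A'' = A → Disjoint A' A'' →
      G.SquareMeets (A ∪ B) A' A'') :
    ∀ P : V → Prop, (∃ a ∈ A, P a) → (∃ a ∈ A, ¬ P a) →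
    ∃ a1 ∈ A, ∃ a2 ∈ A, ∃ b1 ∈ B, ∃ b2 ∈ B, P a1 ∧ ¬ P a2 ∧ G.Sq a1 a2 b1 b2 := by
  rintro P ⟨a, ha, pa⟩ ⟨a', ha', pa'⟩
  obtain ⟨v1, v2, v3, v4, hsq, hsub, h1, h2⟩ := h {x | x ∈ A ∧ P x} {x | x ∈ A ∧ ¬ P x}
    ⟨a, ha, pa⟩ ⟨a', ha', pa'⟩ (by ext x; simp; tauto)
    (by rw [Set.disjoint_left]; rintro x ⟨_, hx⟩ ⟨_, hy⟩; exact hy hx)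
  obtain ⟨a1, ma1, a2, ma2, b1, mb1, b2, mb2, hs, he⟩ := square_norm clA clB hsq hsub hdis
  rw [he] at h1 h2
  obtain ⟨x, hx, hxA, hxP⟩ := h1
  obtain ⟨y, hy, hyA, hyP⟩ := h2
  have hx' : x = a1 ∨ x = a2 := by
    rcases hx with rfl | rfl | rfl | rfl
    · exact Or.inl rfl
    · exact Or.inr rfl
    · exact (hdis _ hxA mb1).elim
    · exact (hdis _ hxA mb2).elim
  have hy' : y = a1 ∨ y = a2 := by
    rcases hy with rfl | rfl | rfl | rfl
    · exact Or.inl rfl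
    · exact Or.inr rfl
    · exact (hdis _ hyA mb1).elim
    · exact (hdis _ hyA mb2).elim
  rcases hx' with rfl | rfl <;> rcases hy' with rfl | rfl
  · exact (hyP hxP).elim
  · exact ⟨_, ma1, _, ma2, _, mb1, _, mb2, hxP, hyP, hs⟩
  · exact ⟨_, ma2, _, ma1, _, mb2, _, mb1, hxP, hyP, hs.swap⟩
  · exact (hyP hxP).elim

theorem SC.of_squareConnected {G : Trigraph V} {A B : Set V} (h : G.SquareConnected A B) :
    G.SC A B := by
  obtain ⟨⟨neA, neB, dis, clA, clB, ns, hom⟩, h1, h2⟩ := h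
  have hdis : ∀ x, x ∈ A → x ∈ B → False := fun x p q => Set.disjoint_left.1 dis p q
  have clA : ∀ x ∈ A, ∀ y ∈ A, x ≠ y → G.θ x y = 1 := fun x p y q r => clA p q r
  have clB : ∀ x ∈ B, ∀ y ∈ B, x ≠ y → G.θ x y = 1 := fun x p y q r => clB p q r
  have SA := sq_of_meets clA clB hdis h1
  have SB := sq_of_meets clB clA (fun x p q => hdis x q p) (by rwa [Set.union_comm])
  have two : (∃ a ∈ A, ∃ a' ∈ A, a ≠ a') ∧ (∃ b ∈ B, ∃ b' ∈ B, b ≠ b') := by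
    obtain ⟨a, ha⟩ := neA
    obtain ⟨b, hb⟩ := neB
    by_cases hA : ∃ a' ∈ A, ¬ (a' = a)
    · obtain ⟨a1, m1, a2, m2, b1, n1, b2, n2, -, -, hs⟩ := SA (· = a) ⟨a, ha, rfl⟩ hA
      exact ⟨⟨a1, m1, a2, m2, hs.1⟩, ⟨b1, n1, b2, n2, hs.2.1⟩⟩
    by_cases hB : ∃ b' ∈ B, ¬ (b' = b)
    · obtain ⟨a1, m1, a2, m2, b1, n1, b2, n2, -, -, hs⟩ := SB (· = b) ⟨b, hb, rfl⟩ hB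
      exact ⟨⟨b1, n1, b2, n2, hs.2.1⟩, ⟨a1, m1, a2, m2, hs.1⟩⟩
    push Not at hA hB
    refine (ns ⟨a, b, ?_, ?_⟩).elim
    · ext x; exact ⟨fun hx => hA x hx, fun hx => by rw [hx]; exact ha⟩
    · ext x; exact ⟨fun hx => hB x hx, fun hx => by rw [hx]; exact hb⟩
  refine ⟨hdis, clA, clB, ?_, ?_, two.1, two.2, SA, SB⟩
  · intro v p q
    have := (hom v (by simp [p, q])).1
    simpa [StronglyComplete, StronglyAnticomplete, StrongAdj, StrongAntiAdj] using this
  · intro v p q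
    have := (hom v (by simp [p, q])).2
    simpa [StronglyComplete, StronglyAnticomplete, StrongAdj, StrongAntiAdj] using this

theorem SC.meets {G : Trigraph V} {A B : Set V} (h : G.SC A B) :
    ∀ A' A'' : Set V, A'.Nonempty → A''.Nonempty → A' ∪ A'' = A → Disjoint A' A'' →
      G.SquareMeets (A ∪ B) A' A'' := by
  rintro A' A'' ⟨a, ha⟩ ⟨a', ha'⟩ rfl hd
  obtain ⟨a1, m1, a2, m2, b1, n1, b2, n2, hp, hq, hs⟩ := h.sqA (· ∈ A') ⟨a, Or.inl ha, ha⟩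
    ⟨a', Or.inr ha', fun hh => Set.disjoint_left.1 hd hh ha'⟩
  have m2' : a2 ∈ A'' := m2.resolve_left hq
  obtain ⟨q1, q2, q3, q4, q5, q6⟩ := hs
  have d11 : a1 ≠ b1 := fun e => h.dis _ m1 (e ▸ n1)
  have d12 : a1 ≠ b2 := fun e => h.dis _ m1 (e ▸ n2)
  have d21 : a2 ≠ b1 := fun e => h.dis _ m2 (e ▸ n1)
  have d22 : a2 ≠ b2 := fun e => h.dis _ m2 (e ▸ n2)
  have c1 := h.clA _ m1 _ m2 q1
  have c2 := h.clB _ n2 _ n1 q2.symm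
  have r1 := G.range_mem a1 b1
  have r2 := G.range_mem a1 b2
  have r3 := G.range_mem a2 b1
  have r4 := G.range_mem a2 b2
  have s1 := G.symm a1 b1
  refine ⟨a1, a2, b2, b1, ⟨⟨d12, ?_⟩, ⟨d21, ?_⟩, ⟨q1, ?_⟩, ⟨d22, ?_⟩, ⟨q2.symm, ?_⟩,
    ⟨d11.symm, ?_⟩⟩, ?_, ⟨a1, by simp, hp⟩, ⟨a2, by simp, m2'⟩⟩
  on_goal 7 =>
    rintro x (rfl | rfl | rfl | rfl)
    · exact Or.inl m1
    · exact Or.inl m2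
    · exact Or.inr n2
    · exact Or.inr n1
  all_goals omega

theorem SC.squareConnected {G : Trigraph V} {A B : Set V} (h : G.SC A B) :
    G.SquareConnected A B := by
  refine ⟨⟨?_, ?_, ?_, ?_, ?_, ?_, ?_⟩, h.meets, ?_⟩
  · obtain ⟨a, ha, _⟩ := h.twoA; exact ⟨a, ha⟩
  · obtain ⟨a, ha, _⟩ := h.twoB; exact ⟨a, ha⟩
  · exact Set.disjoint_left.2 (fun x => h.dis x)
  · exact fun x p y q r => h.clA x p y q r
  · exact fun x p y q r => h.clB x p y q r
  · rintro ⟨a, b, rfl, rfl⟩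
    obtain ⟨x, hx, y, hy, hne⟩ := h.twoA
    exact hne (hx.trans hy.symm)
  · intro v hv
    have h1 : v ∉ A := fun hh => hv (Or.inl hh)
    have h2 : v ∉ B := fun hh => hv (Or.inr hh)
    have i1 := h.hA v h1 h2
    have i2 := h.hB v h1 h2
    simpa [StronglyComplete, StronglyAnticomplete, StrongAdj, StrongAntiAdj] using And.intro i1 i2
  · have := h.flip.meets
    rwa [Set.union_comm] at this

theorem SC.vertex {G : Trigraph V} {A B : Set V} (h : G.SC A B) {a : V} (ha : a ∈ A) :
    (∃ b ∈ B, G.θ a b ≠ 1) ∧ (∃ b ∈ B, G.θ a b ≠ -1) := by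
  obtain ⟨x, hx, y, hy, hne⟩ := h.twoA
  have : ∃ a' ∈ A, ¬ (a' = a) := by
    by_cases e : x = a
    · exact ⟨y, hy, fun e' => hne (e.trans e'.symm)⟩
    · exact ⟨x, hx, e⟩
  obtain ⟨a1, m1, a2, m2, b1, n1, b2, n2, rfl, -, hs⟩ := h.sqA (· = a) ⟨a, ha, rfl⟩ this
  exact ⟨⟨b2, n2, hs.2.2.2.2.1⟩, ⟨b1, n1, hs.2.2.1⟩⟩

/-- Thickening in terms of the projection map. -/
structure Thk (G : Trigraph V) (H : Trigraph W) (p : V → W) : Prop where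
  surj : Function.Surjective p
  cl : ∀ x y, x ≠ y → p x = p y → G.θ x y = 1
  pos : ∀ x y, H.θ (p x) (p y) = 1 → G.θ x y = 1
  neg : ∀ x y, H.θ (p x) (p y) = -1 → G.θ x y = -1
  s1 : ∀ u v, u ≠ v → H.θ u v = 0 → ∃ x y, p x = u ∧ p y = v ∧ G.θ x y ≠ 1
  s2 : ∀ u v, u ≠ v → H.θ u v = 0 → ∃ x y, p x = u ∧ p y = v ∧ G.θ x y ≠ -1

theorem ne_of_theta {G : Trigraph V} {x y : V} (h : G.θ x y ≠ 0) : x ≠ y := by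
  rintro rfl; exact h (G.refl_zero x)

theorem Thk.of_isThickening {G : Trigraph V} {H : Trigraph W} {J : W → Set V}
    (h : G.IsThickening H J) : ∃ p, Thk G H p := by
  obtain ⟨h1, h2, h3, h4⟩ := h
  have hex : ∀ x, ∃ w, x ∈ J w := fun x => by
    have : x ∈ ⋃ v, J v := by rw [h3]; trivial
    simpa using this
  choose p hp using hex
  have huniq : ∀ x w, x ∈ J w → p x = w := fun x w hx => by
    by_contra hne
    exact Set.disjoint_left.1 (h2 _ _ hne) (hp x) hx
  refine ⟨p, ?_, ?_, ?_, ?_, ?_, ?_⟩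
  · intro w
    obtain ⟨x, hx⟩ := (h1 w).1
    exact ⟨x, huniq x w hx⟩
  · intro x y hne he
    exact (h1 (p x)).2 (hp x) (he ▸ hp y) hne
  · intro x y e
    exact (h4 _ _ (ne_of_theta (G := H) (by omega))).1 e _ (hp x) _ (hp y)
  · intro x y e
    exact (h4 _ _ (ne_of_theta (G := H) (by omega))).2.1 e _ (hp x) _ (hp y)
  · intro u v hne e
    have := ((h4 u v hne).2.2 ⟨hne, e⟩).1
    simp only [StronglyComplete, StrongAdj, not_forall] at this
    obtain ⟨x, hx, y, hy, hh⟩ := this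
    exact ⟨x, y, huniq _ _ hx, huniq _ _ hy, hh⟩
  · intro u v hne e
    have := ((h4 u v hne).2.2 ⟨hne, e⟩).2
    simp only [StronglyAnticomplete, StrongAntiAdj, not_forall] at this
    obtain ⟨x, hx, y, hy, hh⟩ := this
    exact ⟨x, y, huniq _ _ hx, huniq _ _ hy, hh⟩

theorem Thk.isThickening {G : Trigraph V} {H : Trigraph W} {p : V → W}
    (h : Thk G H p) : G.IsThickening H (fun w => {x | p x = w}) := by
  refine ⟨fun w => ⟨h.surj w, ?_⟩, ?_, ?_, ?_⟩
  · intro x hx y hy hne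
    exact h.cl x y hne (hx.trans hy.symm)
  · intro u v hne
    rw [Set.disjoint_left]
    intro x hx hy
    exact hne (hx.symm.trans hy)
  · ext x; simp
  · intro u v hne
    refine ⟨?_, ?_, ?_⟩
    · rintro e x rfl y rfl
      exact h.pos _ _ e
    · rintro e x rfl y rfl
      exact h.neg _ _ e
    · rintro ⟨-, e⟩
      obtain ⟨x, y, hx, hy, hh⟩ := h.s1 u v hne e
      obtain ⟨x', y', hx', hy', hh'⟩ := h.s2 u v hne e
      exact ⟨fun hc => hh (hc x hx y hy), fun hc => hh' (hc x' hx' y' hy')⟩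

theorem Thk.pick1 {G : Trigraph V} {H : Trigraph W} {p : V → W} (h : Thk G H p) {u v : W}
    (hne : u ≠ v) (e : H.θ u v ≠ 1) : ∃ x y, p x = u ∧ p y = v ∧ G.θ x y ≠ 1 := by
  rcases H.range_mem u v with r | r | r
  · exact (e r).elim
  · exact h.s1 u v hne r
  · obtain ⟨x, rfl⟩ := h.surj u
    obtain ⟨y, rfl⟩ := h.surj v
    refine ⟨x, y, rfl, rfl, ?_⟩
    rw [h.neg _ _ r]; decide

theorem Thk.pick2 {G : Trigraph V} {H : Trigraph W} {p : V → W} (h : Thk G H p) {u v : W}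
    (hne : u ≠ v) (e : H.θ u v ≠ -1) : ∃ x y, p x = u ∧ p y = v ∧ G.θ x y ≠ -1 := by
  rcases H.range_mem u v with r | r | r
  · obtain ⟨x, rfl⟩ := h.surj u
    obtain ⟨y, rfl⟩ := h.surj v
    refine ⟨x, y, rfl, rfl, ?_⟩
    rw [h.pos _ _ r]; decide
  · exact h.s2 u v hne r
  · exact (e r).elim

theorem Thk.refl (G : Trigraph V) : Thk G G id where
  surj := Function.surjective_id
  cl x y h e := (h e).elim
  pos x y h := h
  neg x y h := h
  s1 u v _ e := ⟨u, v, rfl, rfl, by omega⟩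
  s2 u v _ e := ⟨u, v, rfl, rfl, by omega⟩

theorem Thk.trans {G : Trigraph V} {H : Trigraph W} {K : Trigraph U} {p : V → W} {q : W → U}
    (h : Thk G H p) (k : Thk H K q) : Thk G K (q ∘ p) where
  surj := k.surj.comp h.surj
  cl x y hne e := by
    by_cases hp : p x = p y
    · exact h.cl x y hne hp
    · exact h.pos _ _ (k.cl _ _ hp e)
  pos x y e := h.pos _ _ (k.pos _ _ e)
  neg x y e := h.neg _ _ (k.neg _ _ e)
  s1 u v hne e := by
    obtain ⟨x, y, rfl, rfl, hh⟩ := k.s1 u v hne e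
    obtain ⟨x', y', rfl, rfl, hh'⟩ := h.pick1 (fun e => hne (by rw [e])) hh
    exact ⟨x', y', rfl, rfl, hh'⟩
  s2 u v hne e := by
    obtain ⟨x, y, rfl, rfl, hh⟩ := k.s2 u v hne e
    obtain ⟨x', y', rfl, rfl, hh'⟩ := h.pick2 (fun e => hne (by rw [e])) hh
    exact ⟨x', y', rfl, rfl, hh'⟩

/-- If `θ` takes two different values between two classes, the classes are semiadjacent. -/
theorem Thk.semi {G : Trigraph V} {H : Trigraph W} {p : V → W} (h : Thk G H p) {x y x' y' : V}
    (hx : p x = p x') (hy : p y = p y') (e1 : G.θ x y ≠ 1) (e2 : G.θ x' y' ≠ -1) :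
    H.θ (p x) (p y) = 0 := by
  rcases H.range_mem (p x) (p y) with r | r | r
  · exact (e1 (h.pos _ _ r)).elim
  · exact r
  · rw [hx, hy] at r
    exact (e2 (h.neg _ _ r)).elim

theorem matching {G : Trigraph V} {x y z : V} (h1 : x ≠ y) (h2 : x ≠ z) (e1 : G.θ x y = 0)
    (e2 : G.θ x z = 0) : y = z := by
  by_contra hne
  exact G.semi_matching x y z h1 h2 hne e1 e2

theorem clawFree_of {G : Trigraph V} (h : G.NonDegenerate) : G.ClawFree := by
  rcases h with ⟨h, -⟩ | ⟨h, -⟩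
  · rintro ⟨v, a, b, c, va, vb, vc, ab, ac, bc⟩
    obtain ⟨K1, K2, h1, h2, he⟩ := h v
    have ma : a ∈ K1 ∪ K2 := he ▸ va
    have mb : b ∈ K1 ∪ K2 := he ▸ vb
    have mc : c ∈ K1 ∪ K2 := he ▸ vc
    have key : ∀ K : Set V, G.IsStrongClique K → ∀ x y, G.AntiAdj x y → x ∈ K → y ∈ K → False := by
      intro K hK x y hxy hx hy
      have e : G.θ x y = 1 := hK hx hy hxy.1
      have := hxy.2
      omega
    rcases ma with ma | ma <;> rcases mb with mb | mb <;> rcases mc with mc | mc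
    · exact key _ h1 _ _ ab ma mb
    · exact key _ h1 _ _ ab ma mb
    · exact key _ h1 _ _ ac ma mc
    · exact key _ h2 _ _ bc mb mc
    · exact key _ h1 _ _ bc mb mc
    · exact key _ h2 _ _ ac ma mc
    · exact key _ h2 _ _ ab ma mb
    · exact key _ h2 _ _ ab ma mb
  · exact h

theorem anti_of {G : Trigraph V} {x y : V} (hne : x ≠ y) (h : G.θ x y ≠ 1) : G.AntiAdj x y := by
  refine ⟨hne, ?_⟩
  have := G.range_mem x y
  omega

/-- A connected nondegenerate trigraph has no homogeneous cobipartite non-clique. -/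
theorem no_hom [Finite V] {G : Trigraph V} (hc : G.Connected) (hnd : G.NonDegenerate) {A B : Set V}
    (clA : ∀ x ∈ A, ∀ y ∈ A, x ≠ y → G.θ x y = 1)
    (clB : ∀ x ∈ B, ∀ y ∈ B, x ≠ y → G.θ x y = 1)
    {a b : V} (ha : a ∈ A) (hb : b ∈ B) (hab : a ≠ b) (e : G.θ a b ≠ 1)
    (hom : ∀ v, v ∉ A ∪ B → (∀ x ∈ A ∪ B, G.θ v x = 1) ∨ (∀ x ∈ A ∪ B, G.θ v x = -1)) : False := by
  have claw := clawFree_of hnd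
  have haS : a ∈ A ∪ B := Or.inl ha
  have hbS : b ∈ A ∪ B := Or.inr hb
  have all : ∀ v, v ∈ A ∪ B ∨ (∀ x ∈ A ∪ B, G.θ v x = 1) := by
    intro v
    have hr := hc a v
    induction hr with
    | refl => exact Or.inl haS
    | @tail u w _ huw ih =>
      by_cases hw : w ∈ A ∪ B
      · exact Or.inl hw
      rcases hom w hw with h | h
      · exact Or.inr h
      exfalso
      rcases ih with hu | hu
      · have h1 := h u hu
        have h2 := G.symm u w
        have h3 := huw.2
        omega
      · refine claw ⟨u, a, b, w, ?_, ?_, huw, anti_of hab e, ?_, ?_⟩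
        · have := hu a haS
          exact ⟨ne_of_theta (G := G) (by omega), Or.inl this⟩
        · have := hu b hbS
          exact ⟨ne_of_theta (G := G) (by omega), Or.inl this⟩
        · have := h a haS
          rw [G.symm] at this
          exact ⟨ne_of_theta (G := G) (by omega), Or.inr this⟩
        · have := h b hbS
          rw [G.symm] at this
          exact ⟨ne_of_theta (G := G) (by omega), Or.inr this⟩
  rcases hnd with ⟨hq, hnc⟩ | ⟨-, S, hS, hcard⟩
  · obtain ⟨K1, K2, h1, h2, he⟩ := hq a
    apply hnc
    have mk : ∀ K C : Set V, G.IsStrongClique K → C ⊆ A ∪ B →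
        (∀ x ∈ C, ∀ y ∈ C, x ≠ y → G.θ x y = 1) → G.IsStrongClique ((K \ (A ∪ B)) ∪ C) := by
      intro K C hK hC hcl x hx y hy hne
      rcases hx with hx | hx <;> rcases hy with hy | hy
      · exact hK hx.1 hy.1 hne
      · exact (all x).resolve_left hx.2 y (hC hy)
      · have := (all y).resolve_left hy.2 x (hC hx)
        rw [G.symm] at this
        exact this
      · exact hcl x hx y hy hne
    refine ⟨_, _, mk K1 A h1 Set.subset_union_left clA, mk K2 B h2 Set.subset_union_right clB, ?_⟩
    ext v
    simp only [Set.mem_univ, iff_true]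
    by_cases hv : v ∈ A ∪ B
    · rcases hv with hv | hv
      · exact Or.inl (Or.inr hv)
      · exact Or.inr (Or.inr hv)
    · have h3 := (all v).resolve_left hv a haS
      rw [G.symm] at h3
      have : v ∈ K1 ∪ K2 := by
        rw [← he]
        exact ⟨ne_of_theta (G := G) (by omega), Or.inl h3⟩
      rcases this with h | h
      · exact Or.inl (Or.inl ⟨h, hv⟩)
      · exact Or.inr (Or.inl ⟨h, hv⟩)
  · obtain ⟨x, y, z, hx, hy, hz, hxy, hxz, hyz⟩ := (Set.two_lt_ncard_iff).1 hcard
    have axy := hS hx hy hxy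
    have axz := hS hx hz hxz
    have ayz := hS hy hz hyz
    have mix : ∀ u v, G.AntiAdj u v → u ∈ A ∪ B → v ∈ A ∪ B := by
      intro u v huv hu
      by_contra hv
      have h1 := (all v).resolve_left hv u hu
      have h2 := G.symm u v
      have h3 := huv.2
      omega
    have sy : ∀ u v, G.AntiAdj u v → G.AntiAdj v u := fun u v h =>
      ⟨h.1.symm, by rw [G.symm]; exact h.2⟩
    by_cases hxS : x ∈ A ∪ B
    · have hyS := mix _ _ axy hxS
      have hzS := mix _ _ axz hxS
      have kA : ∀ u v, G.AntiAdj u v → u ∈ A → v ∈ A → False := by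
        intro u v h p q
        have h1 := clA u p v q h.1
        have h2 := h.2
        omega
      have kB : ∀ u v, G.AntiAdj u v → u ∈ B → v ∈ B → False := by
        intro u v h p q
        have h1 := clB u p v q h.1
        have h2 := h.2
        omega
      have a1 := kA _ _ axy
      have a2 := kA _ _ axz
      have a3 := kA _ _ ayz
      have b1 := kB _ _ axy
      have b2 := kB _ _ axz
      have b3 := kB _ _ ayz
      simp only [Set.mem_union] at hxS hyS hzS
      tauto
    · have hyS : y ∉ A ∪ B := fun h => hxS (mix _ _ (sy _ _ axy) h)
      have hzS : z ∉ A ∪ B := fun h => hxS (mix _ _ (sy _ _ axz) h)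
      have ad : ∀ u, u ∉ A ∪ B → G.Adj a u := by
        intro u hu
        have h3 := (all u).resolve_left hu a haS
        rw [G.symm] at h3
        exact ⟨ne_of_theta (G := G) (by omega), Or.inl h3⟩
      exact claw ⟨a, x, y, z, ad _ hxS, ad _ hyS, ad _ hzS, axy, axz, ayz⟩

/-- The two sides of a square-connected pair meet disjoint sets of classes. -/
theorem Thk.sides [Finite V] {G : Trigraph V} (hc : G.Connected) (hnd : G.NonDegenerate)
    {H : Trigraph W} {p : V → W} (h : Thk G H p) {A B : Set V} (hs : G.SC A B) {a b : V}
    (ha : a ∈ A) (hb : b ∈ B) : p a ≠ p b := by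
  intro he
  have hab : a ≠ b := fun e => hs.dis a ha (e ▸ hb)
  have eab : G.θ a b = 1 := h.cl a b hab he
  obtain ⟨b', hb', e1⟩ := (hs.vertex ha).1
  obtain ⟨a', ha', e2⟩ := (hs.flip.vertex hb).1
  have hab' : a ≠ b' := fun e => hs.dis a ha (e ▸ hb')
  have hba' : b ≠ a' := fun e => hs.dis b (e ▸ ha') hb
  have hbb' : b ≠ b' := fun e => e1 (e ▸ eab)
  have haa' : a ≠ a' := fun e => e2 (by rw [G.symm, ← e]; exact eab)
  have ebb : G.θ b b' = 1 := hs.clB b hb b' hb' hbb'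
  have eaa : G.θ a a' = 1 := hs.clA a ha a' ha' haa'
  have nb' : p a ≠ p b' := fun e => e1 (h.cl _ _ hab' e)
  have na' : p a ≠ p a' := fun e => e2 (h.cl _ _ hba' (he.symm.trans e))
  have sb : H.θ (p a) (p b') = 0 := h.semi he rfl e1 (by omega)
  have sa : H.θ (p b) (p a') = 0 := h.semi he.symm rfl e2 (by omega)
  rw [← he] at sa
  -- outside vertices: the value at `a` equals the value at `b`
  refine no_hom hc hnd hs.clA hs.clB ha hb' hab' e1 ?_
  intro v hv
  have hvA : v ∉ A := fun h => hv (Or.inl h)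
  have hvB : v ∉ B := fun h => hv (Or.inr h)
  have hva : v ≠ a := fun e => hvA (e ▸ ha)
  have hvb : v ≠ b := fun e => hvB (e ▸ hb)
  have same : G.θ v a = G.θ v b := by
    by_cases hpv : p v = p a
    · rw [h.cl v a hva hpv, h.cl v b hvb (hpv.trans he)]
    rcases H.range_mem (p v) (p a) with r | r | r
    · rw [h.pos _ _ r, h.pos v b (by rw [← he]; exact r)]
    · -- then `v` lies in the class of `b'` and `a'`
      rw [H.symm] at r
      have hvb' : p v = p b' := matching (fun e => hpv e.symm) nb' r sb
      have hva' : p v = p a' := matching (fun e => hpv e.symm) na' r sa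
      have t1 : G.θ v b' = 1 := h.cl v b' (fun e => hvB (e ▸ hb')) hvb'
      have t2 : G.θ v a' = 1 := h.cl v a' (fun e => hvA (e ▸ ha')) hva'
      have u1 : G.θ v a = 1 := by
        rcases hs.hA v hvA hvB with k | k
        · exact k a ha
        · have := k a' ha'; omega
      have u2 : G.θ v b = 1 := by
        rcases hs.hB v hvA hvB with k | k
        · exact k b hb
        · have := k b' hb'; omega
      rw [u1, u2]
    · rw [h.neg _ _ r, h.neg v b (by rw [← he]; exact r)]
  rcases hs.hA v hvA hvB with k | k <;> rcases hs.hB v hvA hvB with l | l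
  · left; rintro x (hx | hx)
    · exact k x hx
    · exact l x hx
  · have := k a ha; have := l b hb; omega
  · have := k a ha; have := l b hb; omega
  · right; rintro x (hx | hx)
    · exact k x hx
    · exact l x hx

section
variable {G : Trigraph V} {H : Trigraph W} {p : V → W} {A B : Set V}

theorem Thk.sub (h : Thk G H p) (hs : G.SC A B)
    (h0 : ∀ a ∈ A, ∀ b ∈ B, p a ≠ p b) {a : V} (ha : a ∈ A)
    (hn : ∀ b ∈ B, H.θ (p a) (p b) ≠ 0) (z : V) (hz : p z = p a) : z ∈ A := by
  by_contra hzA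
  have hzB : z ∉ B := fun hb => h0 a ha z hb hz.symm
  have same : ∀ b ∈ B, G.θ z b = G.θ a b := by
    intro b hb
    rcases H.range_mem (p a) (p b) with r | r | r
    · rw [h.pos _ _ r, h.pos z b (by rw [hz]; exact r)]
    · exact (hn b hb r).elim
    · rw [h.neg _ _ r, h.neg z b (by rw [hz]; exact r)]
  obtain ⟨⟨b1, m1, e1⟩, ⟨b2, m2, e2⟩⟩ := hs.vertex ha
  rcases hs.hB z hzA hzB with k | k
  · exact e1 (by rw [← same b1 m1]; exact k b1 m1)
  · exact e2 (by rw [← same b2 m2]; exact k b2 m2)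

theorem Thk.imgClique (h : Thk G H p) (hs : G.SC A B)
    (h0 : ∀ a ∈ A, ∀ b ∈ B, p a ≠ p b) : ∀ a ∈ A, ∀ a' ∈ A, p a ≠ p a' →
    H.θ (p a) (p a') = 1 := by
  intro a ha a' ha' hne
  have hne' : a ≠ a' := fun e => hne (by rw [e])
  have e := hs.clA a ha a' ha' hne'
  rcases H.range_mem (p a) (p a') with r | r | r
  · exact r
  · exfalso
    obtain ⟨x, y, hx, hy, hxy⟩ := h.s1 _ _ hne r
    have hxA : x ∈ A := h.sub hs h0 ha (fun b hb e => h0 a' ha' b hb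
      (matching hne (h0 a ha b hb) r e)) x hx
    have r' : H.θ (p a') (p a) = 0 := by rw [H.symm]; exact r
    have hyA : y ∈ A := h.sub hs h0 ha' (fun b hb e => h0 a ha b hb
      (matching hne.symm (h0 a' ha' b hb) r' e)) y hy
    refine hxy (hs.clA x hxA y hyA ?_)
    rintro rfl
    exact hne (hx.symm.trans hy)
  · have := h.neg _ _ r; omega

theorem Thk.imgHom (h : Thk G H p) (hs : G.SC A B)
    (h0 : ∀ a ∈ A, ∀ b ∈ B, p a ≠ p b) (h2 : ∃ a ∈ A, ∃ a' ∈ A, p a ≠ p a') :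
    ∀ w, w ∉ p '' A → w ∉ p '' B →
      (∀ x ∈ p '' A, H.θ w x = 1) ∨ (∀ x ∈ p '' A, H.θ w x = -1) := by
  intro w wA wB
  have zA : ∀ z, p z = w → z ∉ A := fun z hz hA => wA ⟨z, hA, hz⟩
  have zB : ∀ z, p z = w → z ∉ B := fun z hz hB => wB ⟨z, hB, hz⟩
  have nsemi : ∀ a ∈ A, H.θ w (p a) ≠ 0 := by
    intro a ha r
    have hwa : p a ≠ w := fun e => wA ⟨a, ha, e⟩
    have r' : H.θ (p a) w = 0 := by rw [H.symm]; exact r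
    have hsub := h.sub hs h0 ha (fun b hb e => wB ⟨b, hb,
      (matching hwa (h0 a ha b hb) r' e).symm⟩)
    obtain ⟨a', ha', hne⟩ : ∃ a' ∈ A, p a' ≠ p a := by
      obtain ⟨x, hx, y, hy, hxy⟩ := h2
      by_cases e : p x = p a
      · exact ⟨y, hy, fun e' => hxy (e.trans e'.symm)⟩
      · exact ⟨x, hx, e⟩
    have hwa' : p a' ≠ w := fun e => wA ⟨a', ha', e⟩
    rcases H.range_mem w (p a') with q | q | q
    · obtain ⟨z, y, rfl, hy, hh⟩ := h.s1 w (p a) hwa.symm r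
      have h1 := h.pos _ _ q
      rcases hs.hA z (zA z rfl) (zB z rfl) with k | k
      · exact hh (k y (hsub y hy))
      · have := k a' ha'; omega
    · exact hne (matching hwa.symm hwa'.symm r q).symm
    · obtain ⟨z, y, rfl, hy, hh⟩ := h.s2 w (p a) hwa.symm r
      have h1 := h.neg _ _ q
      rcases hs.hA z (zA z rfl) (zB z rfl) with k | k
      · have := k a' ha'; omega
      · exact hh (k y (hsub y hy))
  obtain ⟨z, rfl⟩ := h.surj w
  rcases hs.hA z (zA z rfl) (zB z rfl) with k | k
  · left
    rintro _ ⟨a, ha, rfl⟩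
    have k1 := k a ha
    rcases H.range_mem (p z) (p a) with q | q | q
    · exact q
    · exact (nsemi a ha q).elim
    · have := h.neg _ _ q; omega
  · right
    rintro _ ⟨a, ha, rfl⟩
    have k1 := k a ha
    rcases H.range_mem (p z) (p a) with q | q | q
    · have := h.pos _ _ q; omega
    · exact (nsemi a ha q).elim
    · exact q

theorem Thk.imgSq (h : Thk G H p) (hs : G.SC A B)
    (h0 : ∀ a ∈ A, ∀ b ∈ B, p a ≠ p b) {a1 a2 b1 b2 : V} (m1 : a1 ∈ A) (m2 : a2 ∈ A)
    (n1 : b1 ∈ B) (n2 : b2 ∈ B) (sq : G.Sq a1 a2 b1 b2) (hne : p a1 ≠ p a2) :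
    H.Sq (p a1) (p a2) (p b1) (p b2) := by
  obtain ⟨q1, q2, q3, q4, q5, q6⟩ := sq
  refine ⟨hne, ?_, fun e => q3 (h.neg _ _ e), fun e => q4 (h.neg _ _ e),
    fun e => q5 (h.pos _ _ e), fun e => q6 (h.pos _ _ e)⟩
  intro e
  have t1 : H.θ (p a1) (p b2) = 0 := h.semi rfl e.symm q5 q3
  have t2 : H.θ (p a2) (p b1) = 0 := h.semi rfl e q6 q4
  rw [H.symm, ← e] at t1
  rw [H.symm] at t2
  exact hne (matching (h0 a1 m1 b1 n1).symm (h0 a2 m2 b1 n1).symm t1 t2)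

theorem Thk.imgSqs (h : Thk G H p) (hs : G.SC A B)
    (h0 : ∀ a ∈ A, ∀ b ∈ B, p a ≠ p b) :
    ∀ P : W → Prop, (∃ a ∈ p '' A, P a) → (∃ a ∈ p '' A, ¬ P a) →
    ∃ a1 ∈ p '' A, ∃ a2 ∈ p '' A, ∃ b1 ∈ p '' B, ∃ b2 ∈ p '' B,
      P a1 ∧ ¬ P a2 ∧ H.Sq a1 a2 b1 b2 := by
  rintro P ⟨_, ⟨a, ha, rfl⟩, pa⟩ ⟨_, ⟨a', ha', rfl⟩, pa'⟩
  obtain ⟨a1, m1, a2, m2, b1, n1, b2, n2, hp, hq, sq⟩ :=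
    hs.sqA (fun x => P (p x)) ⟨a, ha, pa⟩ ⟨a', ha', pa'⟩
  refine ⟨_, ⟨a1, m1, rfl⟩, _, ⟨a2, m2, rfl⟩, _, ⟨b1, n1, rfl⟩, _, ⟨b2, n2, rfl⟩, hp, hq,
    h.imgSq hs h0 m1 m2 n1 n2 sq ?_⟩
  intro e
  rw [e] at hp
  exact hq hp

theorem Thk.const (h : Thk G H p) (hL : H.Laminar) (hs : G.SC A B)
    (h0 : ∀ a ∈ A, ∀ b ∈ B, p a ≠ p b) : ∀ a ∈ A, ∀ a' ∈ A, p a = p a' := by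
  intro a ha a' ha'
  by_contra hne
  have h0' : ∀ b ∈ B, ∀ a ∈ A, p b ≠ p a := fun b hb a ha e => h0 a ha b hb e.symm
  have h2 : ∃ a ∈ A, ∃ a' ∈ A, p a ≠ p a' := ⟨a, ha, a', ha', hne⟩
  obtain ⟨_, ⟨a1, m1, rfl⟩, _, ⟨a2, m2, rfl⟩, _, ⟨b1, n1, rfl⟩, _, ⟨b2, n2, rfl⟩, hp, hq, sq⟩ :=
    h.imgSqs hs h0 (· = p a) ⟨_, ⟨a, ha, rfl⟩, rfl⟩ ⟨_, ⟨a', ha', rfl⟩, fun e => hne e.symm⟩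
  have h2' : ∃ a ∈ B, ∃ a' ∈ B, p a ≠ p a' := ⟨b1, n1, b2, n2, sq.2.1⟩
  apply hL
  refine ⟨p '' A, p '' B, SC.squareConnected ?_⟩
  refine ⟨?_, ?_, ?_, h.imgHom hs h0 h2, fun w x y => h.imgHom hs.flip h0' h2' w y x,
    ⟨_, ⟨a1, m1, rfl⟩, _, ⟨a2, m2, rfl⟩, sq.1⟩, ⟨_, ⟨b1, n1, rfl⟩, _, ⟨b2, n2, rfl⟩, sq.2.1⟩,
    h.imgSqs hs h0, h.imgSqs hs.flip h0'⟩
  · rintro _ ⟨x, hx, rfl⟩ ⟨y, hy, e⟩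
    exact h0 x hx y hy e.symm
  · rintro _ ⟨x, hx, rfl⟩ _ ⟨y, hy, rfl⟩ hxy
    exact h.imgClique hs h0 x hx y hy hxy
  · rintro _ ⟨x, hx, rfl⟩ _ ⟨y, hy, rfl⟩ hxy
    exact h.imgClique hs.flip h0' x hx y hy hxy

theorem Thk.semiPair (h : Thk G H p) (hs : G.SC A B)
    (hcB : ∀ b ∈ B, ∀ b' ∈ B, p b = p b') {a b : V} (ha : a ∈ A) (hb : b ∈ B) :
    H.θ (p a) (p b) = 0 := by
  obtain ⟨⟨b1, m1, e1⟩, ⟨b2, m2, e2⟩⟩ := hs.vertex ha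
  rw [hcB b hb b1 m1]
  exact h.semi rfl (hcB b1 m1 b2 m2) e1 e2

end

theorem SC.unionSq {G : Trigraph V} {A B C D : Set V} (h1 : G.SC A B) (h2 : G.SC C D) {x : V}
    (xA : x ∈ A) (xC : x ∈ C) :
    ∀ P : V → Prop, (∃ a ∈ A ∪ C, P a) → (∃ a ∈ A ∪ C, ¬ P a) →
    ∃ a1 ∈ A ∪ C, ∃ a2 ∈ A ∪ C, ∃ b1 ∈ B ∪ D, ∃ b2 ∈ B ∪ D, P a1 ∧ ¬ P a2 ∧ G.Sq a1 a2 b1 b2 := by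
  rintro P ⟨a, ha, pa⟩ ⟨a', ha', pa'⟩
  have k1 : (∃ a ∈ A, P a) → (∃ a ∈ A, ¬ P a) → ∃ a1 ∈ A ∪ C, ∃ a2 ∈ A ∪ C, ∃ b1 ∈ B ∪ D,
      ∃ b2 ∈ B ∪ D, P a1 ∧ ¬ P a2 ∧ G.Sq a1 a2 b1 b2 := by
    intro p q
    obtain ⟨a1, m1, a2, m2, b1, n1, b2, n2, h⟩ := h1.sqA P p q
    exact ⟨a1, Or.inl m1, a2, Or.inl m2, b1, Or.inl n1, b2, Or.inl n2, h⟩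
  have k2 : (∃ a ∈ C, P a) → (∃ a ∈ C, ¬ P a) → ∃ a1 ∈ A ∪ C, ∃ a2 ∈ A ∪ C, ∃ b1 ∈ B ∪ D,
      ∃ b2 ∈ B ∪ D, P a1 ∧ ¬ P a2 ∧ G.Sq a1 a2 b1 b2 := by
    intro p q
    obtain ⟨a1, m1, a2, m2, b1, n1, b2, n2, h⟩ := h2.sqA P p q
    exact ⟨a1, Or.inr m1, a2, Or.inr m2, b1, Or.inr n1, b2, Or.inr n2, h⟩
  by_cases px : P x
  · rcases ha' with ha' | ha'
    · exact k1 ⟨x, xA, px⟩ ⟨a', ha', pa'⟩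
    · exact k2 ⟨x, xC, px⟩ ⟨a', ha', pa'⟩
  · rcases ha with ha | ha
    · exact k1 ⟨a, ha, pa⟩ ⟨x, xA, px⟩
    · exact k2 ⟨a, ha, pa⟩ ⟨x, xC, px⟩

theorem SC.unionHom {G : Trigraph V} {A B C D : Set V} (h1 : G.SC A B) (h2 : G.SC C D) {x : V}
    (xA : x ∈ A) (xC : x ∈ C) : ∀ v, v ∉ A ∪ C → v ∉ B ∪ D →
    (∀ a ∈ A ∪ C, G.θ v a = 1) ∨ (∀ a ∈ A ∪ C, G.θ v a = -1) := by
  intro v hv hw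
  simp only [Set.mem_union, not_or] at hv hw
  rcases h1.hA v hv.1 hw.1 with k | k <;> rcases h2.hA v hv.2 hw.2 with l | l
  · left; rintro y (hy | hy)
    · exact k y hy
    · exact l y hy
  · have := k x xA; have := l x xC; omega
  · have := k x xA; have := l x xC; omega
  · right; rintro y (hy | hy)
    · exact k y hy
    · exact l y hy

theorem SC.union [Finite V] {G : Trigraph V} (hc : G.Connected) (hnd : G.NonDegenerate)
    {H : Trigraph W} {p : V → W} (h : Thk G H p) (hL : H.Laminar) {A B C D : Set V}
    (h1 : G.SC A B) (h2 : G.SC C D) {x : V} (xA : x ∈ A) (xC : x ∈ C) :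
    G.SC (A ∪ C) (B ∪ D) := by
  have sAB : ∀ a ∈ A, ∀ b ∈ B, p a ≠ p b := fun a ha b hb => h.sides hc hnd h1 ha hb
  have sBA : ∀ a ∈ B, ∀ b ∈ A, p a ≠ p b := fun a ha b hb => h.sides hc hnd h1.flip ha hb
  have sCD : ∀ a ∈ C, ∀ b ∈ D, p a ≠ p b := fun a ha b hb => h.sides hc hnd h2 ha hb
  have sDC : ∀ a ∈ D, ∀ b ∈ C, p a ≠ p b := fun a ha b hb => h.sides hc hnd h2.flip ha hb
  have cA := h.const hL h1 sAB
  have cB := h.const hL h1.flip sBA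
  have cC := h.const hL h2 sCD
  have cD := h.const hL h2.flip sDC
  have pAC : ∀ a ∈ A ∪ C, p a = p x := by
    rintro a (ha | ha)
    · exact cA a ha x xA
    · exact cC a ha x xC
  obtain ⟨b0, hb0, -⟩ := h1.twoB
  obtain ⟨d0, hd0, -⟩ := h2.twoB
  have e0 : p b0 = p d0 := matching (sAB x xA b0 hb0) (sCD x xC d0 hd0)
    (h.semiPair h1 cB xA hb0) (h.semiPair h2 cD xC hd0)
  have pBD : ∀ b ∈ B ∪ D, p b = p b0 := by
    rintro a (ha | ha)
    · exact cB a ha b0 hb0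
    · exact (cD a ha d0 hd0).trans e0.symm
  have dis : ∀ y, y ∈ A ∪ C → y ∈ B ∪ D → False := by
    intro y hy hy'
    exact sAB x xA b0 hb0 ((pAC y hy).symm.trans (pBD y hy'))
  have meet : ∃ y, y ∈ B ∧ y ∈ D := by
    by_contra hno
    push Not at hno
    have CA : ∀ c ∈ C, c ∈ A := by
      intro c hcC
      by_contra hcA
      have hcB : c ∉ B := fun hb => dis c (Or.inr hcC) (Or.inl hb)
      have hbC : ∀ b ∈ B, (∀ c ∈ C, G.θ b c = 1) ∨ (∀ c ∈ C, G.θ b c = -1) := fun b hb =>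
        h2.hA b (fun hh => dis b (Or.inr hh) (Or.inl hb)) (hno b hb)
      obtain ⟨⟨b1, m1, e1⟩, ⟨b2, m2, e2⟩⟩ := h1.vertex xA
      rcases h1.hB c hcA hcB with k | k
      · have k1 := k b1 m1
        rw [G.symm] at k1 e1
        rcases hbC b1 m1 with l | l
        · exact e1 (l x xC)
        · have := l c hcC; omega
      · have k1 := k b2 m2
        rw [G.symm] at k1 e2
        rcases hbC b2 m2 with l | l
        · have := l c hcC; omega
        · exact e2 (l x xC)
    have dA : d0 ∉ A := fun hh => dis d0 (Or.inl hh) (Or.inr hd0)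
    have dB : d0 ∉ B := fun hh => hno d0 hh hd0
    obtain ⟨⟨c1, m1, e1⟩, ⟨c2, m2, e2⟩⟩ := h2.flip.vertex hd0
    rcases h1.hA d0 dA dB with k | k
    · exact e1 (k c1 (CA c1 m1))
    · exact e2 (k c2 (CA c2 m2))
  obtain ⟨y, yB, yD⟩ := meet
  refine ⟨dis, ?_, ?_, h1.unionHom h2 xA xC, fun v p q => h1.flip.unionHom h2.flip yB yD v q p,
    ?_, ?_, h1.unionSq h2 xA xC, h1.flip.unionSq h2.flip yB yD⟩
  · intro u hu v hv hne
    exact h.cl u v hne ((pAC u hu).trans (pAC v hv).symm)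
  · intro u hu v hv hne
    exact h.cl u v hne ((pBD u hu).trans (pBD v hv).symm)
  · obtain ⟨a, ha, a', ha', hne⟩ := h1.twoA
    exact ⟨a, Or.inl ha, a', Or.inl ha', hne⟩
  · obtain ⟨a, ha, a', ha', hne⟩ := h1.twoB
    exact ⟨a, Or.inl ha, a', Or.inl ha', hne⟩

/-- A family of square-connected pairs closed under flips and overlapping merges. -/
structure Fam (G : Trigraph V) (F : Set V → Set V → Prop) : Prop where
  sc : ∀ A B, F A B → G.SC A B
  flip : ∀ A B, F A B → F B A
  merge : ∀ A B C D x, F A B → F C D → x ∈ A → x ∈ C →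
    ∃ E E', F E E' ∧ A ⊆ E ∧ C ⊆ E ∧ B ⊆ E' ∧ D ⊆ E'

def FR (F : Set V → Set V → Prop) (x y : V) : Prop := x = y ∨ ∃ A B, F A B ∧ x ∈ A ∧ y ∈ A

section
variable {G : Trigraph V} {F : Set V → Set V → Prop}

theorem FR.symm {x y : V} (h : FR F x y) : FR F y x := by
  rcases h with rfl | ⟨A, B, h, hx, hy⟩
  · exact Or.inl rfl
  · exact Or.inr ⟨A, B, h, hy, hx⟩

theorem Fam.trans (hF : Fam G F) {x y z : V} (h : FR F x y) (h' : FR F y z) : FR F x z := by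
  rcases h with rfl | ⟨A, B, h, hx, hy⟩
  · exact h'
  rcases h' with rfl | ⟨C, D, h', hy', hz⟩
  · exact Or.inr ⟨A, B, h, hx, hy⟩
  · obtain ⟨E, E', hE, s1, s2, -, -⟩ := hF.merge A B C D y h h' hy hy'
    exact Or.inr ⟨E, E', hE, s1 hx, s2 hz⟩

/-- The setoid of a family. -/
def Fam.setoid (hF : Fam G F) : Setoid V :=
  ⟨FR F, fun _ => Or.inl rfl, fun h => h.symm, fun h h' => hF.trans h h'⟩

theorem Fam.cl (hF : Fam G F) {x y : V} (h : FR F x y) (hne : x ≠ y) : G.θ x y = 1 := by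
  rcases h with rfl | ⟨A, B, h, hx, hy⟩
  · exact (hne rfl).elim
  · exact (hF.sc A B h).clA x hx y hy hne

/-- Non-uniformity between classes comes from a pair in the family: one-sided version. -/
theorem Fam.nonunif1 (hF : Fam G F) {x x' y : V} (hx : FR F x x') (hn : ¬ FR F x y)
    (hne : G.θ x y ≠ G.θ x' y) : ∃ A B, F A B ∧ x ∈ A ∧ x' ∈ A ∧ y ∈ B := by
  rcases hx with rfl | ⟨A, B, h, hx, hx'⟩
  · exact (hne rfl).elim
  by_cases hyB : y ∈ B
  · exact ⟨A, B, h, hx, hx', hyB⟩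
  have hyA : y ∉ A := fun hh => hn (Or.inr ⟨A, B, h, hx, hh⟩)
  exfalso
  apply hne
  rw [G.symm x y, G.symm x' y]
  rcases (hF.sc A B h).hA y hyA hyB with k | k
  · rw [k x hx, k x' hx']
  · rw [k x hx, k x' hx']

theorem Fam.nonunif (hF : Fam G F) {x x' y y' : V} (hx : FR F x x') (hy : FR F y y')
    (hn : ¬ FR F x y) (hne : G.θ x y ≠ G.θ x' y') : ∃ A B, F A B ∧ x ∈ A ∧ y ∈ B := by
  by_cases e : G.θ x y = G.θ x' y
  · rw [e, G.symm x' y, G.symm x' y'] at hne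
    have hn' : ¬ FR F y x' := fun hh => hn (hF.trans hx hh.symm)
    obtain ⟨B, A, h, hyB, hyB', hxA⟩ := hF.nonunif1 hy hn' hne
    rcases hx with rfl | ⟨C, D, h', hxC, hxC'⟩
    · exact ⟨A, B, hF.flip _ _ h, hxA, hyB⟩
    · obtain ⟨E, E', hE, s1, s2, s3, s4⟩ := hF.merge C D A B x' h' (hF.flip _ _ h) hxC' hxA
      exact ⟨E, E', hE, s1 hxC, s4 hyB⟩
  · obtain ⟨A, B, h, h1, -, h2⟩ := hF.nonunif1 hx hn e
    exact ⟨A, B, h, h1, h2⟩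

/-- Semiadjacency of classes. -/
def FSemi (G : Trigraph V) (F : Set V → Set V → Prop) (x y : V) : Prop :=
  ¬ FR F x y ∧ (∃ x' y', FR F x x' ∧ FR F y y' ∧ G.θ x' y' ≠ 1) ∧
    (∃ x' y', FR F x x' ∧ FR F y y' ∧ G.θ x' y' ≠ -1)

theorem Fam.semi_cases (hF : Fam G F) {x y : V} (h : FSemi G F x y) :
    (∃ A B, F A B ∧ x ∈ A ∧ y ∈ B) ∨ G.θ x y = 0 := by
  obtain ⟨hn, ⟨x1, y1, hx1, hy1, e1⟩, ⟨x2, y2, hx2, hy2, e2⟩⟩ := h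
  by_cases k : G.θ x y = G.θ x1 y1
  · by_cases l : G.θ x y = G.θ x2 y2
    · right
      have := G.range_mem x y
      omega
    · exact Or.inl (hF.nonunif hx2 hy2 hn l)
  · exact Or.inl (hF.nonunif hx1 hy1 hn k)

theorem Fam.matching (hF : Fam G F) {x y z : V} (h1 : FSemi G F x y) (h2 : FSemi G F x z) :
    FR F y z := by
  by_contra hn
  have mixed : ∀ y z, FSemi G F x y → FSemi G F x z → ¬ FR F y z →
      (∃ A B, F A B ∧ x ∈ A ∧ y ∈ B) → G.θ x z ≠ 0 := by
    rintro y z h1 h2 hn ⟨A, B, h, hx, hy⟩ e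
    have hzA : z ∉ A := fun hh => h2.1 (Or.inr ⟨A, B, h, hx, hh⟩)
    have hzB : z ∉ B := fun hh => hn (Or.inr ⟨B, A, hF.flip _ _ h, hy, hh⟩)
    rw [G.symm] at e
    rcases (hF.sc A B h).hA z hzA hzB with k | k
    · have := k x hx; omega
    · have := k x hx; omega
  rcases hF.semi_cases h1 with k | k <;> rcases hF.semi_cases h2 with l | l
  · obtain ⟨A, B, h, hx, hy⟩ := k
    obtain ⟨C, D, h', hx', hz⟩ := l
    obtain ⟨E, E', hE, -, -, s3, s4⟩ := hF.merge A B C D x h h' hx hx'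
    exact hn (Or.inr ⟨E', E, hF.flip _ _ hE, s3 hy, s4 hz⟩)
  · exact mixed y z h1 h2 hn k l
  · exact mixed z y h2 h1 (fun hh => hn hh.symm) l k
  · refine hn (Or.inl (Trigraph.matching ?_ ?_ k l))
    · rintro rfl; exact h1.1 (Or.inl rfl)
    · rintro rfl; exact h2.1 (Or.inl rfl)

theorem Fam.mk_eq (hF : Fam G F) {x y : V} :
    (Quotient.mk hF.setoid x = Quotient.mk hF.setoid y) ↔ FR F x y := Quotient.eq

open Classical in
/-- Adjacency values on the quotient. -/
noncomputable def Fam.val (hF : Fam G F) (p q : Quotient hF.setoid) : ℤ :=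
  if p = q then 0 else
  if ∀ x y, Quotient.mk hF.setoid x = p → Quotient.mk hF.setoid y = q → G.θ x y = 1 then 1 else
  if ∀ x y, Quotient.mk hF.setoid x = p → Quotient.mk hF.setoid y = q → G.θ x y = -1 then -1 else 0

theorem Fam.val_zero' (hF : Fam G F) {p q : Quotient hF.setoid} (h : hF.val p q = 0)
    (hne : p ≠ q) :
    (∃ x y, Quotient.mk hF.setoid x = p ∧ Quotient.mk hF.setoid y = q ∧ G.θ x y ≠ 1) ∧
    (∃ x y, Quotient.mk hF.setoid x = p ∧ Quotient.mk hF.setoid y = q ∧ G.θ x y ≠ -1) := by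
  unfold Fam.val at h
  rw [if_neg hne] at h
  have k1 : ¬ ∀ x y, Quotient.mk hF.setoid x = p → Quotient.mk hF.setoid y = q →
      G.θ x y = 1 := by
    intro k
    rw [if_pos k] at h
    omega
  have k2 : ¬ ∀ x y, Quotient.mk hF.setoid x = p → Quotient.mk hF.setoid y = q →
      G.θ x y = -1 := by
    intro k
    rw [if_neg k1, if_pos k] at h
    omega
  push Not at k1 k2
  exact ⟨k1, k2⟩

theorem Fam.val_zero (hF : Fam G F) {x y : V}
    (h : hF.val (Quotient.mk _ x) (Quotient.mk _ y) = 0)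
    (hne : Quotient.mk hF.setoid x ≠ Quotient.mk hF.setoid y) : FSemi G F x y := by
  obtain ⟨⟨x1, y1, hx1, hy1, e1⟩, ⟨x2, y2, hx2, hy2, e2⟩⟩ := hF.val_zero' h hne
  exact ⟨fun hh => hne (hF.mk_eq.2 hh), ⟨x1, y1, (hF.mk_eq.1 hx1).symm, (hF.mk_eq.1 hy1).symm, e1⟩,
    ⟨x2, y2, (hF.mk_eq.1 hx2).symm, (hF.mk_eq.1 hy2).symm, e2⟩⟩

/-- The quotient trigraph of a family. -/
noncomputable def Fam.quot (hF : Fam G F) : Trigraph (Quotient hF.setoid) where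
  θ := hF.val
  range_mem p q := by unfold Fam.val; split_ifs <;> simp
  symm p q := by
    have s : ∀ c : ℤ, (∀ x y, Quotient.mk hF.setoid x = p → Quotient.mk hF.setoid y = q →
        G.θ x y = c) ↔ (∀ x y, Quotient.mk hF.setoid x = q → Quotient.mk hF.setoid y = p →
        G.θ x y = c) := fun c =>
      ⟨fun h x y hx hy => by rw [G.symm]; exact h y x hy hx,
       fun h x y hx hy => by rw [G.symm]; exact h y x hy hx⟩
    classical
    unfold Fam.val
    exact if_congr eq_comm rfl (if_congr (s 1) rfl (if_congr (s (-1)) rfl rfl))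
  refl_zero p := by unfold Fam.val; simp
  semi_matching u v w := by
    induction u using Quotient.inductionOn with | _ x
    induction v using Quotient.inductionOn with | _ y
    induction w using Quotient.inductionOn with | _ z
    intro h1 h2 h3 e1 e2
    exact h3 (hF.mk_eq.2 (hF.matching (hF.val_zero e1 h1) (hF.val_zero e2 h2)))

theorem Fam.thk (hF : Fam G F) : Thk G hF.quot (Quotient.mk hF.setoid) where
  surj := Quotient.mk_surjective
  cl x y hne e := hF.cl (hF.mk_eq.1 e) hne
  pos x y e := by
    change hF.val _ _ = 1 at e
    unfold Fam.val at e
    split_ifs at e with h0 h1 h2 <;> first | (exfalso; omega) | exact h1 x y rfl rfl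
  neg x y e := by
    change hF.val _ _ = -1 at e
    unfold Fam.val at e
    split_ifs at e with h0 h1 h2 <;> first | (exfalso; omega) | exact h2 x y rfl rfl
  s1 u v hne e := by
    exact (hF.val_zero' e hne).1
  s2 u v hne e := by
    exact (hF.val_zero' e hne).2

end

/-- The family of one pair. -/
theorem fam_single {G : Trigraph V} {A B : Set V} (h : G.SC A B) :
    Fam G (fun X Y => (X = A ∧ Y = B) ∨ (X = B ∧ Y = A)) where
  sc := by
    rintro _ _ (⟨rfl, rfl⟩ | ⟨rfl, rfl⟩)
    · exact h
    · exact h.flip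
  flip := by tauto
  merge := by
    rintro _ _ _ _ x (⟨rfl, rfl⟩ | ⟨rfl, rfl⟩) (⟨rfl, rfl⟩ | ⟨rfl, rfl⟩) hx hy
    · exact ⟨_, _, Or.inl ⟨rfl, rfl⟩, le_rfl, le_rfl, le_rfl, le_rfl⟩
    · exact (h.dis x hx hy).elim
    · exact (h.dis x hy hx).elim
    · exact ⟨_, _, Or.inr ⟨rfl, rfl⟩, le_rfl, le_rfl, le_rfl, le_rfl⟩

theorem exists_laminar : ∀ (n : ℕ) (V : Type) [Finite V] (G : Trigraph V), Nat.card V = n →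
    ∃ (W : Type) (H : Trigraph W) (p : V → W), Thk G H p ∧ H.Laminar := by
  intro n
  induction n using Nat.strong_induction_on with
  | _ n ih =>
    intro V _ G hn
    by_cases hL : G.Laminar
    · exact ⟨V, G, id, Thk.refl G, hL⟩
    unfold Laminar at hL
    push Not at hL
    obtain ⟨A, B, hAB⟩ := hL
    have hs := SC.of_squareConnected hAB
    have hF := fam_single hs
    have ht := hF.thk
    obtain ⟨a, ha, a', ha', hne⟩ := hs.twoA
    have hlt : Nat.card (Quotient hF.setoid) < n := by
      rw [← hn]
      refine lt_of_le_of_ne (Nat.card_le_card_of_surjective _ ht.surj) ?_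
      intro e
      have hb := (Nat.bijective_iff_surjective_and_card _).2 ⟨ht.surj, e.symm⟩
      exact hne (hb.1 (hF.mk_eq.2 (Or.inr ⟨A, B, Or.inl ⟨rfl, rfl⟩, ha, ha'⟩)))
    obtain ⟨W, H, q, hq, hHL⟩ := ih _ hlt (Quotient hF.setoid) hF.quot rfl
    exact ⟨W, H, _, ht.trans hq, hHL⟩

/-- The family of all pairs. -/
theorem fam_all [Finite V] {G : Trigraph V} (hc : G.Connected) (hnd : G.NonDegenerate) :
    Fam G G.SC where
  sc _ _ h := h
  flip _ _ h := h.flip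
  merge A B C D x h1 h2 hx hy := by
    obtain ⟨W, H, p, hp, hL⟩ := exists_laminar _ V G rfl
    exact ⟨A ∪ C, B ∪ D, h1.union hc hnd hp hL h2 hx hy, Set.subset_union_left,
      Set.subset_union_right, Set.subset_union_left, Set.subset_union_right⟩

theorem lift_sq {G : Trigraph V} {H : Trigraph W} {p : V → W} (h : Thk G H p) {X Y : Set W}
    (hs : H.SC X Y) (hp : ∀ x y, p x = p y ↔ FR G.SC x y)
    (hside : ∀ A B, G.SC A B → ∀ a ∈ A, ∀ b ∈ B, p a ≠ p b) :
    ∀ P : V → Prop, (∃ a ∈ p ⁻¹' X, P a) → (∃ a ∈ p ⁻¹' X, ¬ P a) →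
    ∃ a1 ∈ p ⁻¹' X, ∃ a2 ∈ p ⁻¹' X, ∃ b1 ∈ p ⁻¹' Y, ∃ b2 ∈ p ⁻¹' Y,
      P a1 ∧ ¬ P a2 ∧ G.Sq a1 a2 b1 b2 := by
  rintro P ⟨a, ha, pa⟩ ⟨a', ha', pa'⟩
  by_cases hsplit : ∃ x x', p x = p x' ∧ p x ∈ X ∧ P x ∧ ¬ P x'
  · obtain ⟨x, x', e, hX, px, px'⟩ := hsplit
    rcases (hp x x').1 e with rfl | ⟨A, B, hAB, hx, hx'⟩
    · exact (px' px).elim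
    have cA : ∀ c ∈ A, p c = p x := fun c hcA => (hp _ _).2 (Or.inr ⟨A, B, hAB, hcA, hx⟩)
    have cB : ∀ b ∈ B, ∀ b' ∈ B, p b = p b' := fun b hb b' hb' =>
      (hp _ _).2 (Or.inr ⟨B, A, hAB.flip, hb, hb'⟩)
    have inY : ∀ b ∈ B, p b ∈ Y := by
      intro b hb
      have r := h.semiPair hAB cB hx hb
      by_contra hY
      by_cases hbX : p b ∈ X
      · have := hs.clA _ hX _ hbX (hside A B hAB x hx b hb)
        omega
      · rw [H.symm] at r
        rcases hs.hA _ hbX hY with k | k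
        · have := k _ hX; omega
        · have := k _ hX; omega
    obtain ⟨a1, m1, a2, m2, b1, n1, b2, n2, q1, q2, sq⟩ :=
      hAB.sqA P ⟨x, hx, px⟩ ⟨x', hx', px'⟩
    have mX : ∀ c ∈ A, p c ∈ X := fun c hcA => by rw [cA c hcA]; exact hX
    exact ⟨a1, mX _ m1, a2, mX _ m2, b1, inY _ n1, b2, inY _ n2, q1, q2, sq⟩
  · push Not at hsplit
    obtain ⟨x1, m1, x2, m2, y1, n1, y2, n2, ⟨c, rfl, pc⟩, q2, sq⟩ :=
      hs.sqA (fun w => ∃ x, p x = w ∧ P x) ⟨p a, ha, a, rfl, pa⟩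
      ⟨p a', ha', fun ⟨x, e, px⟩ => pa' (hsplit x a' e (e ▸ ha') px)⟩
    have d : ∀ u v, u ∈ X → v ∈ Y → u ≠ v := fun u v hu hv e => hs.dis u hu (e ▸ hv)
    obtain ⟨s1, s2, s3, s4, s5, s6⟩ := sq
    have fin : ∀ a1 a2 b1 b2, p a1 = p c → p a2 = x2 → p b1 = y1 → p b2 = y2 →
        G.θ a1 b1 ≠ -1 → G.θ a2 b2 ≠ -1 → G.θ a1 b2 ≠ 1 → G.θ a2 b1 ≠ 1 →
        ∃ a1 ∈ p ⁻¹' X, ∃ a2 ∈ p ⁻¹' X, ∃ b1 ∈ p ⁻¹' Y, ∃ b2 ∈ p ⁻¹' Y,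
        P a1 ∧ ¬ P a2 ∧ G.Sq a1 a2 b1 b2 := by
      rintro a1 a2 b1 b2 e1 rfl rfl rfl t1 t2 t3 t4
      refine ⟨a1, by rw [Set.mem_preimage, e1]; exact m1, a2, m2, b1, n1, b2, n2,
        hsplit c a1 e1.symm m1 pc, fun hh => q2 ⟨a2, rfl, hh⟩, ?_, ?_, t1, t2, t3, t4⟩
      · rintro rfl; exact s1 e1.symm
      · rintro rfl; exact s2 rfl
    by_cases hz : H.θ (p c) y2 = 0 ∨ H.θ x2 y1 = 0
    · have z1 : H.θ (p c) y1 = 1 := by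
        have := H.range_mem (p c) y1
        rcases this with r | r | r
        · exact r
        · exfalso
          rcases hz with hz | hz
          · exact s2 (matching (d _ _ m1 n1) (d _ _ m1 n2) r hz)
          · rw [H.symm] at r hz
            exact s1 (matching (d _ _ m1 n1).symm (d _ _ m2 n1).symm r hz)
        · exact (s3 r).elim
      have z2 : H.θ x2 y2 = 1 := by
        have := H.range_mem x2 y2
        rcases this with r | r | r
        · exact r
        · exfalso
          rcases hz with hz | hz
          · rw [H.symm] at r hz
            exact s1 (matching (d _ _ m1 n2).symm (d _ _ m2 n2).symm hz r)
          · exact s2 (matching (d _ _ m2 n1) (d _ _ m2 n2) hz r)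
        · exact (s4 r).elim
      obtain ⟨a1, b2, e1, e2, t1⟩ := h.pick1 (d _ _ m1 n2) s5
      obtain ⟨a2, b1, e3, e4, t2⟩ := h.pick1 (d _ _ m2 n1) s6
      refine fin a1 a2 b1 b2 e1 e3 e4 e2 ?_ ?_ t1 t2
      · rw [h.pos a1 b1 (by rw [e1, e4]; exact z1)]; decide
      · rw [h.pos a2 b2 (by rw [e3, e2]; exact z2)]; decide
    · push Not at hz
      have r1 := H.range_mem (p c) y2
      have r2 := H.range_mem x2 y1
      have z1 : H.θ (p c) y2 = -1 := by have := hz.1; omega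
      have z2 : H.θ x2 y1 = -1 := by have := hz.2; omega
      obtain ⟨a1, b1, e1, e2, t1⟩ := h.pick2 (d _ _ m1 n1) s3
      obtain ⟨a2, b2, e3, e4, t2⟩ := h.pick2 (d _ _ m2 n2) s4
      refine fin a1 a2 b1 b2 e1 e3 e2 e4 t1 t2 ?_ ?_
      · rw [h.neg a1 b2 (by rw [e1, e4]; exact z1)]; decide
      · rw [h.neg a2 b1 (by rw [e3, e2]; exact z2)]; decide

theorem lift_SC {G : Trigraph V} {H : Trigraph W} {p : V → W} (h : Thk G H p) {X Y : Set W}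
    (hs : H.SC X Y) (hp : ∀ x y, p x = p y ↔ FR G.SC x y)
    (hside : ∀ A B, G.SC A B → ∀ a ∈ A, ∀ b ∈ B, p a ≠ p b) : G.SC (p ⁻¹' X) (p ⁻¹' Y) := by
  have cl : ∀ Z : Set W, (∀ x ∈ Z, ∀ y ∈ Z, x ≠ y → H.θ x y = 1) →
      ∀ x ∈ p ⁻¹' Z, ∀ y ∈ p ⁻¹' Z, x ≠ y → G.θ x y = 1 := by
    intro Z hZ x hx y hy hne
    by_cases e : p x = p y
    · exact h.cl x y hne e
    · exact h.pos _ _ (hZ _ hx _ hy e)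
  have two : ∀ Z : Set W, (∃ a ∈ Z, ∃ a' ∈ Z, a ≠ a') →
      ∃ a ∈ p ⁻¹' Z, ∃ a' ∈ p ⁻¹' Z, a ≠ a' := by
    rintro Z ⟨w, hw, w', hw', hne⟩
    obtain ⟨x, rfl⟩ := h.surj w
    obtain ⟨y, rfl⟩ := h.surj w'
    exact ⟨x, hw, y, hw', fun e => hne (by rw [e])⟩
  refine ⟨fun x => hs.dis (p x), cl X hs.clA, cl Y hs.clB, ?_, ?_, two X hs.twoA, two Y hs.twoB,
    lift_sq h hs hp hside, lift_sq h hs.flip hp hside⟩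
  · intro v h1 h2
    rcases hs.hA (p v) h1 h2 with k | k
    · exact Or.inl fun a ha => h.pos _ _ (k _ ha)
    · exact Or.inr fun a ha => h.neg _ _ (k _ ha)
  · intro v h1 h2
    rcases hs.hB (p v) h1 h2 with k | k
    · exact Or.inl fun a ha => h.pos _ _ (k _ ha)
    · exact Or.inr fun a ha => h.neg _ _ (k _ ha)

theorem quot_laminar [Finite V] {G : Trigraph V} (hc : G.Connected) (hnd : G.NonDegenerate)
    (hF : Fam G G.SC) : hF.quot.Laminar := by
  rintro ⟨X, Y, hXY⟩
  have hs := SC.of_squareConnected hXY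
  have hl := lift_SC hF.thk hs (fun x y => hF.mk_eq)
    (fun A B h a ha b hb => hF.thk.sides hc hnd h ha hb)
  obtain ⟨w, hw, w', hw', hne⟩ := hs.twoA
  obtain ⟨x, rfl⟩ := hF.thk.surj w
  obtain ⟨y, rfl⟩ := hF.thk.surj w'
  exact hne (hF.mk_eq.2 (Or.inr ⟨_, _, hl, hw, hw'⟩))

/-- Every laminar antithickening factors through the canonical quotient. -/
theorem Thk.factor [Finite V] {G : Trigraph V} (hc : G.Connected) (hnd : G.NonDegenerate)
    (hF : Fam G G.SC) {H : Trigraph W} {p : V → W} (h : Thk G H p) (hL : H.Laminar) :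
    ∃ g : Quotient hF.setoid → W, Function.Surjective g ∧ ∀ x, g (Quotient.mk _ x) = p x := by
  have hR : ∀ x y, FR G.SC x y → p x = p y := by
    rintro x y (rfl | ⟨A, B, hs, hx, hy⟩)
    · rfl
    · exact h.const hL hs (fun a ha b hb => h.sides hc hnd hs ha hb) x hx y hy
  refine ⟨Quotient.lift p hR, ?_, fun x => rfl⟩
  intro w
  obtain ⟨x, rfl⟩ := h.surj w
  exact ⟨Quotient.mk _ x, rfl⟩

theorem optimal_iso [Finite V] {G : Trigraph V} (hc : G.Connected) (hnd : G.NonDegenerate)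
    (hF : Fam G G.SC) {H : Trigraph W} {J : W → Set V} (h : G.OptimalAntithickening H J) :
    ∃ f : Quotient hF.setoid ≃ W, ∀ u v, H.θ (f u) (f v) = hF.quot.θ u v := by
  obtain ⟨h1, h2, h3⟩ := h
  obtain ⟨p, hp⟩ := Thk.of_isThickening h1
  obtain ⟨g, gs, hg⟩ := hp.factor hc hnd hF h2
  have hcard := h3 _ _ _ hF.thk.isThickening (quot_laminar hc hnd hF)
  have hle := Nat.card_le_card_of_surjective g gs
  have hb := (Nat.bijective_iff_surjective_and_card g).2 ⟨gs, le_antisymm hcard hle⟩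
  refine ⟨Equiv.ofBijective g hb, ?_⟩
  intro u v
  change H.θ (g u) (g v) = _
  by_cases huv : u = v
  · subst huv
    rw [H.refl_zero, hF.quot.refl_zero]
  have hguv : g u ≠ g v := fun e => huv (hb.1 e)
  have cls : ∀ x q, p x = g q → Quotient.mk hF.setoid x = q := fun x q e =>
    hb.1 ((hg x).trans e)
  have ht := hF.thk
  rcases H.range_mem (g u) (g v) with r | r | r
  · rw [r]
    rcases hF.quot.range_mem u v with s | s | s
    · exact s.symm
    · exfalso
      obtain ⟨x, y, rfl, rfl, hh⟩ := ht.s1 u v huv s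
      rw [hg, hg] at r
      exact hh (hp.pos _ _ r)
    · exfalso
      obtain ⟨x, rfl⟩ := ht.surj u
      obtain ⟨y, rfl⟩ := ht.surj v
      rw [hg, hg] at r
      have a := hp.pos _ _ r
      have b := ht.neg _ _ s
      omega
  · rw [r]
    obtain ⟨x, y, hx, hy, e1⟩ := hp.s1 _ _ hguv r
    obtain ⟨x', y', hx', hy', e2⟩ := hp.s2 _ _ hguv r
    have hx := cls _ _ hx
    have hy := cls _ _ hy
    have hx' := cls _ _ hx'
    have hy' := cls _ _ hy'
    have := ht.semi (hx.trans hx'.symm) (hy.trans hy'.symm) e1 e2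
    rw [hx, hy] at this
    exact this.symm
  · rw [r]
    rcases hF.quot.range_mem u v with s | s | s
    · exfalso
      obtain ⟨x, rfl⟩ := ht.surj u
      obtain ⟨y, rfl⟩ := ht.surj v
      rw [hg, hg] at r
      have a := hp.neg _ _ r
      have b := ht.pos _ _ s
      omega
    · exfalso
      obtain ⟨x, y, rfl, rfl, hh⟩ := ht.s2 u v huv s
      rw [hg, hg] at r
      exact hh (hp.neg _ _ r)
    · exact s.symm

end Trigraph

/-- Every connected non-degenerate trigraph has an optimal antithickening,
and any two optimal antithickenings of it are isomorphic as trigraphs. -/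
theorem optimal_antithickening_exists_unique {V : Type} [Fintype V] (G : Trigraph V)
    (hconn : G.Connected) (hnd : G.NonDegenerate) :
    (∃ (W : Type) (G' : Trigraph W) (I : W → Set V), G.OptimalAntithickening G' I) ∧
    (∀ (W1 : Type) (G1 : Trigraph W1) (I1 : W1 → Set V)
       (W2 : Type) (G2 : Trigraph W2) (I2 : W2 → Set V),
       G.OptimalAntithickening G1 I1 → G.OptimalAntithickening G2 I2 →
       G1.Isomorphic G2) := by
  have hF := Trigraph.fam_all hconn hnd
  refine ⟨⟨_, hF.quot, _, hF.thk.isThickening, Trigraph.quot_laminar hconn hnd hF, ?_⟩, ?_⟩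
  · intro W H J hJ hL
    obtain ⟨p, hp⟩ := Trigraph.Thk.of_isThickening hJ
    obtain ⟨g, gs, -⟩ := hp.factor hconn hnd hF hL
    exact Nat.card_le_card_of_surjective g gs
  · intro W1 G1 I1 W2 G2 I2 h1 h2
    obtain ⟨f1, e1⟩ := Trigraph.optimal_iso hconn hnd hF h1
    obtain ⟨f2, e2⟩ := Trigraph.optimal_iso hconn hnd hF h2
    refine ⟨f1.symm.trans f2, fun u v => ?_⟩
    have k1 := e1 (f1.symm u) (f1.symm v)
    have k2 := e2 (f1.symm u) (f1.symm v)
    simp only [Equiv.apply_symm_apply] at k1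
    simp only [Equiv.trans_apply]
    rw [k2, k1]
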